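/- Suppose β,γ ∈ [-1/2,1/2] and α ∈ (-1,0). There exists a constant C > 0, depending only on α, β, γ, a, b, such that for all integers m ≥ 1 and n ≥ 0: |A^{α,γ,β}_{mn}| ≤ C·c_n·m^{-2α-γ-3/2}. -/

import Mathlib

open Real MeasureTheory Set Filter

/-- Normalizing factor `δ'_n(β,γ)` for the orthonormal Jacobi polynomials. -/
noncomputable def jacobiDelta (β γ : ℝ) (n : ℕ) : ℝ :=
  Real.sqrt ((β + γ + 2 * n + 1) * Real.Gamma (β + γ + n + 1) /
    (n.factorial * Real.Gamma (β + n + 1) * Real.Gamma (γ + n + 1)))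

/-- The orthonormal Jacobi polynomial `p_n^{(β,γ)}` on `(a,b)`. -/
noncomputable def jacobiP (a b β γ : ℝ) (n : ℕ) (x : ℝ) : ℝ :=
  (-1 : ℝ) ^ n * (b - a) ^ (-(n : ℝ) - (β + γ + 1) / 2) * jacobiDelta β γ n *
    (x - a) ^ (-β) * (b - x) ^ (-γ) *
    iteratedDeriv n (fun t : ℝ => (t - a) ^ (β + n) * (b - t) ^ (γ + n)) x

/-- Generalized binomial coefficient `binom(x, j) = Γ(x+1)/(j!·Γ(x-j+1))`. -/
noncomputable def genBinom (x : ℝ) (j : ℕ) : ℝ :=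
  Real.Gamma (x + 1) / (j.factorial * Real.Gamma (x - j + 1))

/-- The coefficient `C̃_n^k(β,γ)`. -/
noncomputable def Ctilde (β γ : ℝ) (n k : ℕ) : ℝ :=
  ∑ i ∈ Finset.range (k + 1),
    (n.choose i : ℝ) * genBinom ((n : ℝ) + β) (n - i) * genBinom ((n : ℝ) + γ) i *
      (k.choose i : ℝ) * genBinom ((n : ℝ) - i) (k - i) * (i.factorial : ℝ)

/-- The Euler Beta function `B(x,y) = Γ(x)Γ(y)/Γ(x+y)`. -/
noncomputable def betaB (x y : ℝ) : ℝ := Real.Gamma x * Real.Gamma y / Real.Gamma (x + y)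

/-- The matrix coefficients `A^{α,β,γ}_{mn}`. -/
noncomputable def Acoef (α β γ : ℝ) (m n : ℕ) : ℝ :=
  jacobiDelta β γ m * jacobiDelta β γ n *
    ∑ k ∈ Finset.range (n + 1),
      (-1 : ℝ) ^ k * Ctilde β γ n k * betaB (α + β + k + 1) (γ + m + 1) /
        Real.Gamma ((k : ℝ) + α - m + 1)

/-- The coefficient `c_n = δ'_n·n!·Γ(n+β+1)·Γ(n+γ+1)/4^n`. -/
noncomputable def cCoef (β γ : ℝ) (n : ℕ) : ℝ :=
  jacobiDelta β γ n * n.factorial * Real.Gamma (n + β + 1) * Real.Gamma (n + γ + 1) / 4 ^ n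

/-- The weighted `L_p` norm `‖f‖_{L_p(I,ω)}` with `ω(x) = (x-a)^β (b-x)^γ`, `I = (a,b)`. -/
noncomputable def wnorm (a b β γ p : ℝ) (f : ℝ → ℝ) : ℝ :=
  (∫ x in Set.Ioo a b, |f x| ^ p * ((x - a) ^ β * (b - x) ^ γ)) ^ (1 / p)

/-- Membership in the weighted Lebesgue space `L_p(I,ω)`. -/
def MemWLp (a b β γ p : ℝ) (f : ℝ → ℝ) : Prop :=
  MeasurableSet (Set.Ioo a b) ∧
    IntegrableOn (fun x : ℝ => |f x| ^ p * ((x - a) ^ β * (b - x) ^ γ)) (Set.Ioo a b)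

/-- The right-sided Riemann–Liouville fractional integral `I^μ_{b-}`. -/
noncomputable def fracIntR (b μ : ℝ) (f : ℝ → ℝ) (x : ℝ) : ℝ :=
  (1 / Real.Gamma μ) * ∫ t in Set.Ioo x b, f t * (t - x) ^ (μ - 1)

/-- The left-sided Riemann–Liouville fractional integral `I^μ_{a+}`. -/
noncomputable def fracIntL (a μ : ℝ) (f : ℝ → ℝ) (x : ℝ) : ℝ :=
  (1 / Real.Gamma μ) * ∫ t in Set.Ioo a x, f t * (x - t) ^ (μ - 1)

/-- The right-sided Riemann–Liouville fractional derivative `D^μ_{b-}`. -/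
noncomputable def fracDerR (b μ : ℝ) (f : ℝ → ℝ) (x : ℝ) : ℝ :=
  - deriv (fun y : ℝ => fracIntR b (1 - μ) f y) x

/-- Jacobi coefficients `f_n` of a function `f`. -/
noncomputable def jacobiCoef (a b β γ : ℝ) (f : ℝ → ℝ) (n : ℕ) : ℝ :=
  ∫ x in Set.Ioo a b, f x * jacobiP a b β γ n x * ((x - a) ^ β * (b - x) ^ γ)

/-- Partial sums `S_k f` of the Jacobi series of `f`. -/
noncomputable def jacobiPartial (a b β γ : ℝ) (f : ℝ → ℝ) (k : ℕ) (x : ℝ) : ℝ :=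
  ∑ n ∈ Finset.range (k + 1), jacobiCoef a b β γ f n * jacobiP a b β γ n x

open Asymptotics

/-!
For every real `x`, `Γ(m + x) ∼ m ^ x Γ(m)` as `m → ∞`: for `x > 1` this is Euler's limit formula,
and the functional equation carries it down to all `x`. With the reflection formula for
`1 / Γ(k + α - m + 1)`, each Gamma factor of the `k`-th term of `A_{mn}` is bounded, uniformly in
`m ≥ 1` and `k`, by a power of `m`, a power of `Γ(m)` and `k!`, up to a factor geometric in `k`.
Multiplied together with `δ'_m`, the powers of `Γ(m)` and of `k!` cancel and the exponents of `m`
add up to the one claimed. The binomial coefficients in `C̃_n^k` and the number of terms cost a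
factor `D ^ n` at most, which the `n! / 4 ^ n` in `c_n` absorbs.
-/

section GammaAsymptotics

lemma Gamma_add_nat_eq_mul_prod {x : ℝ} (hx : ∀ k : ℕ, x + k ≠ 0) (m : ℕ) :
    Gamma (x + m) = Gamma x * ∏ j ∈ Finset.range m, (x + j) := by
  induction m with
  | zero => simp
  | succ m ih =>
    rw [Nat.cast_succ, ← add_assoc, Gamma_add_one (hx m), ih, Finset.prod_range_succ]
    ring

lemma GammaSeq_mul_Gamma_add_nat {x : ℝ} (hx : ∀ k : ℕ, x + k ≠ 0) (m : ℕ) :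
    GammaSeq x m * Gamma (x + (m + 1 : ℕ)) = Gamma x * ((m : ℝ) ^ x * m.factorial) := by
  have hprod : ∏ j ∈ Finset.range (m + 1), (x + j) ≠ 0 :=
    Finset.prod_ne_zero_iff.2 fun j _ => hx j
  rw [Gamma_add_nat_eq_mul_prod hx, GammaSeq]
  field_simp

lemma rpow_add_one_mul_Gamma_nat (x : ℝ) {m : ℕ} (hm : 1 ≤ m) :
    (m : ℝ) ^ (x + 1) * Gamma m = (m : ℝ) ^ x * m.factorial := by
  have hm0 : (m : ℝ) ≠ 0 := by positivity
  rw [rpow_add_one hm0, ← Gamma_nat_eq_factorial, Gamma_add_one hm0, mul_assoc]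

lemma isEquivalent_Gamma_nat_add_of_one_lt {x : ℝ} (hx : 1 < x) :
    (fun m : ℕ => Gamma (m + x)) ~[atTop] fun m => (m : ℝ) ^ x * Gamma m := by
  obtain ⟨y, rfl⟩ : ∃ y, x = y + 1 := ⟨x - 1, by ring⟩
  have hy : 0 < y := by linarith
  have hseq : Tendsto (fun m => Gamma y / GammaSeq y m) atTop (nhds 1) := by
    have h := tendsto_const_nhds (x := Gamma y).div (GammaSeq_tendsto_Gamma y)
      (Gamma_pos_of_pos hy).ne'
    rwa [div_self (Gamma_pos_of_pos hy).ne'] at h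
  refine isEquivalent_of_tendsto_one (hseq.congr' ?_)
  filter_upwards [eventually_ge_atTop 1] with m hm
  have hΓ := GammaSeq_mul_Gamma_add_nat (x := y) (fun k => by positivity) m
  have hpos : 0 < GammaSeq y m := by unfold GammaSeq; positivity
  rw [Pi.div_apply, rpow_add_one_mul_Gamma_nat y hm, div_eq_div_iff hpos.ne' (by positivity), ← hΓ]
  push_cast
  ring_nf

lemma isEquivalent_Gamma_nat_add_of_add_one {x : ℝ}
    (h : (fun m : ℕ => Gamma (m + (x + 1))) ~[atTop] fun m => (m : ℝ) ^ (x + 1) * Gamma m) :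
    (fun m : ℕ => Gamma (m + x)) ~[atTop] fun m => (m : ℝ) ^ x * Gamma m := by
  have hlin : (fun m : ℕ => (m : ℝ)) ~[atTop] fun m => (m : ℝ) + x :=
    isEquivalent_of_tendsto_one (tendsto_natCast_div_add_atTop x)
  refine IsEquivalent.congr_left (IsEquivalent.congr_right (h.div hlin.symm) ?_) ?_
  · filter_upwards [eventually_ge_atTop 1] with m hm
    have hm0 : (m : ℝ) ≠ 0 := by positivity
    simp only [Pi.div_apply]
    rw [rpow_add_one hm0]
    field_simp
  · have hlarge : ∀ᶠ m : ℕ in atTop, -x < m := tendsto_natCast_atTop_atTop.eventually_gt_atTop (-x)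
    filter_upwards [hlarge] with m hm
    have hmx : (m : ℝ) + x ≠ 0 := by linarith
    simp only [Pi.div_apply]
    rw [← add_assoc, Gamma_add_one hmx, mul_div_cancel_left₀ _ hmx]

theorem isEquivalent_Gamma_nat_add (x : ℝ) :
    (fun m : ℕ => Gamma (m + x)) ~[atTop] fun m => (m : ℝ) ^ x * Gamma m := by
  obtain ⟨p, hp⟩ := exists_nat_gt (1 - x)
  induction p generalizing x with
  | zero => exact isEquivalent_Gamma_nat_add_of_one_lt (by simpa using hp)
  | succ p ih =>
    refine isEquivalent_Gamma_nat_add_of_add_one (ih (x + 1) ?_)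
    push_cast at hp
    linarith

lemma isBigO_inv_Gamma_nat_add (x : ℝ) :
    (fun m : ℕ => (Gamma (m + x))⁻¹) =O[atTop] fun m => ((m : ℝ) ^ x * Gamma m)⁻¹ :=
  (isEquivalent_Gamma_nat_add x).inv.isBigO

-- Euler's reflection formula turns `1 / Γ(1 + x - m)` into `Γ(m - x) sin(π(m - x)) / π`.
lemma isBigO_inv_Gamma_add_one_sub_nat (x : ℝ) :
    (fun m : ℕ => (Gamma (x + 1 - m))⁻¹) =O[atTop] fun m => (m : ℝ) ^ (-x) * Gamma m := by
  refine IsBigO.trans (IsBigO.of_bound π⁻¹ ?_) (isEquivalent_Gamma_nat_add (-x)).isBigO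
  filter_upwards [tendsto_natCast_atTop_atTop.eventually_gt_atTop x] with m hm
  have hΓ : 0 < Gamma (m + -x) := Gamma_pos_of_pos (by linarith)
  have hreflect := Gamma_mul_Gamma_one_sub (m + -x)
  rw [show 1 - (m + -x) = x + 1 - m by ring] at hreflect
  have hinv : (Gamma (x + 1 - m))⁻¹ = π⁻¹ * (Gamma (m + -x) * sin (π * (m + -x))) := by
    rw [eq_div_of_mul_eq hΓ.ne' ((mul_comm _ _).trans hreflect)]
    simp only [div_eq_mul_inv, mul_inv, inv_inv]
    ring
  rw [hinv, norm_mul, norm_mul, norm_of_nonneg (inv_nonneg.2 pi_pos.le)]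
  gcongr
  exact mul_le_of_le_one_right (norm_nonneg _) (abs_sin_le_one _)

lemma isBigO_one_inv_Gamma_nat_add (x : ℝ) :
    (fun m : ℕ => (Gamma (m + x))⁻¹) =O[atTop] fun _ => (1 : ℝ) := by
  refine IsBigO.of_bound 1 ?_
  filter_upwards [tendsto_natCast_atTop_atTop.eventually_ge_atTop (2 - x)] with m hm
  have hΓ : 1 ≤ Gamma (m + x) := by
    rw [← Gamma_two]
    exact Gamma_strictMonoOn_Ici.monotoneOn (mem_Ici.2 le_rfl) (mem_Ici.2 (by linarith))
      (by linarith)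
  rw [norm_inv, norm_of_nonneg (by linarith), norm_one, mul_one]
  exact inv_le_one_of_one_le₀ hΓ

end GammaAsymptotics

section UniformGammaBounds

lemma exists_abs_le_of_isBigO_nat {f g : ℕ → ℝ} (h : f =O[atTop] g) :
    ∃ C > 0, ∀ m, 0 < g m → |f m| ≤ C * g m := by
  obtain ⟨C, hC, hbound⟩ := bound_of_isBigO_nat_atTop h
  exact ⟨C, hC, fun m hm => by simpa only [norm_eq_abs, abs_of_pos hm] using hbound hm.ne'⟩

lemma Gamma_nat_mul_factorial_le {m : ℕ} (hm : 1 ≤ m) (k : ℕ) :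
    Gamma m * k.factorial ≤ Gamma ((m + k : ℕ) : ℝ) := by
  obtain ⟨p, rfl⟩ := Nat.exists_eq_add_of_le' hm
  have hle : p.factorial * k.factorial ≤ (p + k).factorial :=
    Nat.le_of_dvd (Nat.factorial_pos _) (Nat.factorial_mul_factorial_dvd_factorial_add p k)
  rw [show p + 1 + k = p + k + 1 by ring, Nat.cast_succ, Nat.cast_succ, Gamma_nat_eq_factorial,
    Gamma_nat_eq_factorial]
  exact_mod_cast hle

lemma rpow_le_rpow_abs_mul_rpow {x y c : ℝ} (hx : 0 < x) (hxy : x ≤ y) (hyx : y ≤ c * x) (s : ℝ) :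
    x ^ s ≤ c ^ |s| * y ^ s := by
  have hy : 0 < y := hx.trans_le hxy
  have hc : 1 ≤ c := (le_mul_iff_one_le_left hx).1 (hxy.trans hyx)
  rcases le_total 0 s with hs | hs
  · calc x ^ s ≤ y ^ s := rpow_le_rpow hx.le hxy hs
      _ ≤ c ^ |s| * y ^ s :=
        le_mul_of_one_le_left (by positivity) (one_le_rpow hc (abs_nonneg s))
  · calc x ^ s = c ^ |s| * (c * x) ^ s := by
          rw [mul_rpow (by positivity) hx.le, ← mul_assoc, ← rpow_add (by positivity),
            abs_of_nonpos hs, neg_add_cancel, rpow_zero, one_mul]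
      _ ≤ c ^ |s| * y ^ s := by
          gcongr ?_ * ?_
          exact rpow_le_rpow_of_nonpos hy hyx hs

lemma rpow_nat_le_exp_mul_rpow_nat_add (s : ℝ) {m : ℕ} (hm : 1 ≤ m) (k : ℕ) :
    (m : ℝ) ^ s ≤ exp (k * |s|) * ((m + k : ℕ) : ℝ) ^ s := by
  have hm1 : (1 : ℝ) ≤ m := by exact_mod_cast hm
  have hgrowth : ((m + k : ℕ) : ℝ) ≤ exp k * m := by
    calc ((m + k : ℕ) : ℝ) = m + k * 1 := by push_cast; ring
      _ ≤ m + k * m := by gcongr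
      _ = (k + 1) * m := by ring
      _ ≤ exp k * m := by gcongr; exact add_one_le_exp _
  rw [exp_mul]
  exact rpow_le_rpow_abs_mul_rpow (by linarith) (by simp) hgrowth s

lemma exists_abs_Gamma_nat_add_le (x : ℝ) :
    ∃ C > 0, ∀ k : ℕ, |Gamma (k + x)| ≤ C * (exp k * k.factorial) := by
  have hrpow : (fun k : ℕ => (k : ℝ) ^ (x - 1)) =O[atTop] fun k : ℕ => exp k :=
    (isLittleO_rpow_exp_atTop (x - 1)).isBigO.comp_tendsto tendsto_natCast_atTop_atTop
  have hΓ : (fun k : ℕ => Gamma (k + x)) =O[atTop] fun k : ℕ => exp k * k.factorial := by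
    refine (isEquivalent_Gamma_nat_add x).isBigO.trans ?_
    refine (hrpow.mul (isBigO_refl (fun k : ℕ => (k.factorial : ℝ)) _)).congr' ?_ .rfl
    filter_upwards [eventually_ge_atTop 1] with k hk
    rw [← rpow_add_one_mul_Gamma_nat _ hk, sub_add_cancel]
  obtain ⟨C, hC, hbound⟩ := exists_abs_le_of_isBigO_nat hΓ
  exact ⟨C, hC, fun k => hbound k (by positivity)⟩

lemma exists_abs_Gamma_nat_add_le_rpow (x : ℝ) :
    ∃ C > 0, ∀ m : ℕ, 1 ≤ m → |Gamma (m + x)| ≤ C * ((m : ℝ) ^ x * Gamma m) := by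
  obtain ⟨C, hC, hbound⟩ := exists_abs_le_of_isBigO_nat (isEquivalent_Gamma_nat_add x).isBigO
  exact ⟨C, hC, fun m hm => hbound m (by positivity)⟩

lemma exists_abs_inv_Gamma_nat_add_le (x : ℝ) :
    ∃ C > 0, ∀ k : ℕ, |(Gamma (k + x))⁻¹| ≤ C := by
  obtain ⟨C, hC, hbound⟩ := exists_abs_le_of_isBigO_nat (isBigO_one_inv_Gamma_nat_add x)
  exact ⟨C, hC, fun k => (hbound k one_pos).trans_eq (mul_one C)⟩

lemma exists_abs_inv_Gamma_nat_add_nat_add_le (x : ℝ) :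
    ∃ C > 0, ∀ m k : ℕ, 1 ≤ m →
      |(Gamma ((m + k : ℕ) + x))⁻¹| ≤
        C * (exp (k * |x|) * ((m : ℝ) ^ x * Gamma m * k.factorial)⁻¹) := by
  obtain ⟨C, hC, hbound⟩ := exists_abs_le_of_isBigO_nat (isBigO_inv_Gamma_nat_add x)
  refine ⟨C, hC, fun m k hm => ?_⟩
  have hfactorial := Gamma_nat_mul_factorial_le hm k
  have hrpow := rpow_nat_le_exp_mul_rpow_nat_add x hm k
  calc |(Gamma ((m + k : ℕ) + x))⁻¹|
      ≤ C * (((m + k : ℕ) : ℝ) ^ x * Gamma (m + k : ℕ))⁻¹ := hbound (m + k) (by positivity)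
    _ ≤ C * (exp (k * |x|) * ((m : ℝ) ^ x * Gamma m * k.factorial)⁻¹) := by
        gcongr
        rw [← div_eq_mul_inv, ← inv_div]
        apply inv_anti₀ (by positivity)
        rw [div_le_iff₀ (by positivity)]
        calc (m : ℝ) ^ x * Gamma m * k.factorial = (m : ℝ) ^ x * (Gamma m * k.factorial) := by ring
          _ ≤ exp (k * |x|) * ((m + k : ℕ) : ℝ) ^ x * Gamma (m + k : ℕ) := by gcongr
          _ = ((m + k : ℕ) : ℝ) ^ x * Gamma (m + k : ℕ) * exp (k * |x|) := by ring

lemma exists_abs_inv_Gamma_add_one_sub_nat_le_rpow (x : ℝ) :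
    ∃ C > 0, ∀ m : ℕ, 1 ≤ m → |(Gamma (x + 1 - m))⁻¹| ≤ C * ((m : ℝ) ^ (-x) * Gamma m) := by
  obtain ⟨C, hC, hbound⟩ := exists_abs_le_of_isBigO_nat (isBigO_inv_Gamma_add_one_sub_nat x)
  exact ⟨C, hC, fun m hm => hbound m (by positivity)⟩

lemma rpow_mul_Gamma_nat_le_exp_mul (s : ℝ) {m : ℕ} (hm : 1 ≤ m) (k : ℕ) :
    (m : ℝ) ^ s * Gamma m ≤ exp (k * |s|) * (((m + k : ℕ) : ℝ) ^ s * Gamma ((m + k : ℕ) : ℝ)) := by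
  have hΓ : 0 < Gamma (m : ℝ) := by positivity
  have hΓle : Gamma m ≤ Gamma ((m + k : ℕ) : ℝ) :=
    (le_mul_of_one_le_right hΓ.le (by exact_mod_cast k.factorial_pos)).trans
      (Gamma_nat_mul_factorial_le hm k)
  rw [← mul_assoc]
  exact mul_le_mul (rpow_nat_le_exp_mul_rpow_nat_add s hm k) hΓle hΓ.le (by positivity)

lemma exists_abs_inv_Gamma_nat_add_sub_nat_le (x : ℝ) :
    ∃ C > 0, ∀ m k : ℕ, 1 ≤ m →
      |(Gamma (k + x - m + 1))⁻¹| ≤ C * (exp (k * |x|) * ((m : ℝ) ^ (-x) * Gamma m)) := by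
  obtain ⟨C₁, hC₁, hneg⟩ := exists_abs_inv_Gamma_add_one_sub_nat_le_rpow x
  obtain ⟨C₂, -, hnonneg⟩ := exists_abs_inv_Gamma_nat_add_le (x + 1)
  refine ⟨max C₁ C₂, by positivity, fun m k hm => ?_⟩
  rcases lt_or_ge k m with hkm | hmk
  · obtain ⟨j, rfl⟩ := Nat.exists_eq_add_of_le' hkm.le
    have hj : 1 ≤ j := by lia
    rw [show (k : ℝ) + x - (j + k : ℕ) + 1 = x + 1 - j by push_cast; ring]
    calc |(Gamma (x + 1 - j))⁻¹| ≤ C₁ * ((j : ℝ) ^ (-x) * Gamma j) := hneg j hj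
      _ ≤ max C₁ C₂ * _ := by
        have hshift := rpow_mul_Gamma_nat_le_exp_mul (-x) hj k
        rw [abs_neg] at hshift
        gcongr
        exact le_max_left _ _
  · obtain ⟨j, rfl⟩ := Nat.exists_eq_add_of_le' hmk
    rw [show ((j + m : ℕ) : ℝ) + x - m + 1 = j + (x + 1) by push_cast; ring]
    have hone : 1 ≤ exp ((j + m : ℕ) * |x|) * ((m : ℝ) ^ (-x) * Gamma m) := by
      have hshift := rpow_mul_Gamma_nat_le_exp_mul (-x) le_rfl (m - 1)
      rw [Nat.add_sub_cancel' hm, Nat.cast_one, one_rpow, Gamma_one, abs_neg, one_mul] at hshift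
      refine hshift.trans ?_
      gcongr
      lia
    calc |(Gamma (j + (x + 1)))⁻¹| ≤ C₂ := hnonneg j
      _ ≤ max C₁ C₂ * _ := (le_max_right _ _).trans (le_mul_of_one_le_right (by positivity) hone)

end UniformGammaBounds

section JacobiCoefficients

lemma jacobiDelta_nonneg (β γ : ℝ) (n : ℕ) : 0 ≤ jacobiDelta β γ n :=
  Real.sqrt_nonneg _

lemma jacobiDelta_comm (β γ : ℝ) (n : ℕ) : jacobiDelta β γ n = jacobiDelta γ β n := by
  unfold jacobiDelta
  ring_nf

lemma isBigO_jacobiDelta_radicand (β γ : ℝ) :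
    (fun m : ℕ => (β + γ + 2 * m + 1) * Gamma (β + γ + m + 1) /
      (m.factorial * Gamma (β + m + 1) * Gamma (γ + m + 1))) =O[atTop]
      fun m => (m : ℝ)⁻¹ * (Gamma m)⁻¹ ^ 2 := by
  have hlin : (fun m : ℕ => β + γ + 2 * m + 1) =O[atTop] fun m => (m : ℝ) := by
    have hconst : (fun _ : ℕ => β + γ + 1) =O[atTop] fun m => (m : ℝ) :=
      (isLittleO_const_id_atTop (β + γ + 1)).isBigO.comp_tendsto tendsto_natCast_atTop_atTop
    refine (hconst.add (isBigO_const_mul_self 2 (fun m : ℕ => (m : ℝ)) atTop)).congr_left ?_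
    intro m
    ring
  have hfactors := (((hlin.mul (isEquivalent_Gamma_nat_add (β + γ + 1)).isBigO).mul
    (isBigO_refl (fun m : ℕ => (m.factorial : ℝ)⁻¹) atTop)).mul
    (isBigO_inv_Gamma_nat_add (β + 1))).mul (isBigO_inv_Gamma_nat_add (γ + 1))
  refine hfactors.congr' (.of_forall fun m => ?_) ?_
  · dsimp only
    rw [show (m : ℝ) + (β + γ + 1) = β + γ + m + 1 by ring,
      show (m : ℝ) + (β + 1) = β + m + 1 by ring, show (m : ℝ) + (γ + 1) = γ + m + 1 by ring]
    simp only [div_eq_mul_inv, mul_inv, mul_assoc]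
  · filter_upwards [eventually_ge_atTop 1] with m hm
    have hm0 : (0 : ℝ) < m := by exact_mod_cast hm
    rw [← Gamma_nat_eq_factorial, Gamma_add_one hm0.ne']
    simp only [rpow_add hm0, rpow_one]
    field_simp

lemma isBigO_jacobiDelta (β γ : ℝ) :
    jacobiDelta β γ =O[atTop] fun m => (m : ℝ) ^ (-(1 / 2) : ℝ) * (Gamma m)⁻¹ := by
  refine ((isBigO_jacobiDelta_radicand β γ).sqrt
    (.of_forall fun m => by dsimp only [Pi.zero_apply]; positivity)).congr' .rfl ?_
  filter_upwards [eventually_ge_atTop 1] with m hm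
  rw [Real.sqrt_mul (by positivity), Real.sqrt_sq (by positivity), rpow_neg (by positivity),
    ← sqrt_eq_rpow, sqrt_inv]

lemma exists_jacobiDelta_le (β γ : ℝ) :
    ∃ C > 0, ∀ m : ℕ, 1 ≤ m →
      jacobiDelta β γ m ≤ C * ((m : ℝ) ^ (-(1 / 2) : ℝ) * (Gamma m)⁻¹) := by
  obtain ⟨C, hC, hbound⟩ := exists_abs_le_of_isBigO_nat (isBigO_jacobiDelta β γ)
  exact ⟨C, hC, fun m hm => (le_abs_self _).trans (hbound m (by positivity))⟩

lemma genBinom_natCast {n k : ℕ} (hkn : k ≤ n) : genBinom (n : ℝ) k = n.choose k := by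
  rw [genBinom, ← Nat.cast_sub hkn, Gamma_nat_eq_factorial, Gamma_nat_eq_factorial,
    Nat.cast_choose ℝ hkn]

lemma exists_abs_genBinom_nat_add_le (β : ℝ) :
    ∃ C > 0, ∀ n i : ℕ, i ≤ n →
      |genBinom (n + β) i| ≤ C * |Gamma (n + β + 1)| / i.factorial := by
  obtain ⟨C, hC, hbound⟩ := exists_abs_inv_Gamma_nat_add_le (β + 1)
  refine ⟨C, hC, fun n i hin => ?_⟩
  have hinv := hbound (n - i)
  rw [Nat.cast_sub hin, show (n : ℝ) - i + (β + 1) = n + β - i + 1 by ring] at hinv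
  calc |genBinom (n + β) i|
      = |(Gamma (n + β - i + 1))⁻¹| * |Gamma (n + β + 1)| / i.factorial := by
        simp only [genBinom, abs_div, abs_mul, abs_inv, Nat.abs_cast]
        ring
    _ ≤ C * |Gamma (n + β + 1)| / i.factorial := by gcongr

lemma choose_mul_choose_mul_choose_le {n k : ℕ} (hkn : k ≤ n) (i : ℕ) :
    n.choose i * k.choose i * (n - i).choose (k - i) ≤ 8 ^ n := by
  have hle (N j : ℕ) (hN : N ≤ n) : N.choose j ≤ 2 ^ n :=
    (Nat.choose_le_two_pow N j).trans (Nat.pow_le_pow_right two_pos hN)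
  calc n.choose i * k.choose i * (n - i).choose (k - i) ≤ 2 ^ n * 2 ^ n * 2 ^ n :=
        Nat.mul_le_mul (Nat.mul_le_mul (hle n i le_rfl) (hle k i hkn)) (hle _ _ (n.sub_le i))
    _ = 8 ^ n := by rw [← mul_pow, ← mul_pow]; norm_num

lemma abs_sum_range_succ_le {f : ℕ → ℝ} {k n : ℕ} {M : ℝ} (hkn : k ≤ n)
    (hf : ∀ i ≤ k, |f i| ≤ M) : |∑ i ∈ Finset.range (k + 1), f i| ≤ 2 ^ n * M := by
  have hM : 0 ≤ M := (abs_nonneg _).trans (hf 0 k.zero_le)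
  have hcard : ((k + 1 : ℕ) : ℝ) ≤ 2 ^ n := by
    exact_mod_cast (Nat.succ_le_succ hkn).trans (Nat.lt_two_pow_self (n := n))
  calc |∑ i ∈ Finset.range (k + 1), f i| ≤ ∑ i ∈ Finset.range (k + 1), |f i| :=
        Finset.abs_sum_le_sum_abs _ _
    _ ≤ (k + 1 : ℕ) * M := by
        simpa using Finset.sum_le_card_nsmul (Finset.range (k + 1)) (fun i => |f i|) M
          fun i hi => hf i (Finset.mem_range_succ_iff.1 hi)
    _ ≤ 2 ^ n * M := by gcongr

lemma exists_abs_Ctilde_le (β γ : ℝ) :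
    ∃ C > 0, ∀ n k : ℕ, k ≤ n →
      |Ctilde β γ n k| ≤ C * 16 ^ n * (|Gamma (n + β + 1)| * |Gamma (n + γ + 1)|) := by
  obtain ⟨Cβ, hCβ, hβ⟩ := exists_abs_genBinom_nat_add_le β
  obtain ⟨Cγ, hCγ, hγ⟩ := exists_abs_genBinom_nat_add_le γ
  refine ⟨Cβ * Cγ, by positivity, fun n k hkn => ?_⟩
  have hterm : ∀ i ≤ k, |(n.choose i : ℝ) * genBinom (n + β) (n - i) * genBinom (n + γ) i *
      k.choose i * genBinom (n - i) (k - i) * i.factorial| ≤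
        8 ^ n * (Cβ * |Gamma (n + β + 1)| * (Cγ * |Gamma (n + γ + 1)|)) := fun i hik => by
    have hβi : |genBinom (n + β) (n - i)| ≤ Cβ * |Gamma (n + β + 1)| :=
      (hβ n (n - i) (n.sub_le i)).trans
        (div_le_self (by positivity) (by exact_mod_cast (n - i).factorial_pos))
    have hγi := hγ n i (hik.trans hkn)
    rw [le_div_iff₀ (by positivity)] at hγi
    have hchoose : (n.choose i * k.choose i * (n - i).choose (k - i) : ℝ) ≤ 8 ^ n := by
      exact_mod_cast choose_mul_choose_mul_choose_le hkn i
    rw [← Nat.cast_sub (hik.trans hkn), genBinom_natCast (Nat.sub_le_sub_right hkn i)]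
    simp only [abs_mul, Nat.abs_cast]
    calc _ = (n.choose i * k.choose i * (n - i).choose (k - i) : ℝ) *
          (|genBinom (n + β) (n - i)| * (|genBinom (n + γ) i| * i.factorial)) := by ring
      _ ≤ _ := by gcongr
  calc |Ctilde β γ n k| ≤ 2 ^ n * _ := abs_sum_range_succ_le hkn hterm
    _ = Cβ * Cγ * 16 ^ n * (|Gamma (n + β + 1)| * |Gamma (n + γ + 1)|) := by
        rw [show (16 : ℝ) = 2 * 8 by norm_num, mul_pow]
        ring

lemma exists_abs_betaB_div_Gamma_le (α β γ : ℝ) :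
    ∃ C > 0, ∃ D ≥ 0, ∀ m k : ℕ, 1 ≤ m →
      |betaB (α + β + k + 1) (γ + m + 1) / Gamma (k + α - m + 1)| ≤
        C * exp (k * D) * ((m : ℝ) ^ (-2 * α - β - 1) * Gamma m) := by
  obtain ⟨C₁, hC₁, hnum⟩ := exists_abs_Gamma_nat_add_le (α + β + 1)
  obtain ⟨C₂, hC₂, hnum'⟩ := exists_abs_Gamma_nat_add_le_rpow (γ + 1)
  obtain ⟨C₃, hC₃, hden⟩ := exists_abs_inv_Gamma_nat_add_nat_add_le (α + β + γ + 2)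
  obtain ⟨C₄, hC₄, hden'⟩ := exists_abs_inv_Gamma_nat_add_sub_nat_le α
  refine ⟨C₁ * C₂ * C₃ * C₄, by positivity, 1 + |α + β + γ + 2| + |α|, by positivity,
    fun m k hm => ?_⟩
  have hm0 : (0 : ℝ) < m := by exact_mod_cast hm
  have hrpow : (m : ℝ) ^ (-2 * α - β - 1) =
      (m : ℝ) ^ (γ + 1) * ((m : ℝ) ^ (α + β + γ + 2))⁻¹ * (m : ℝ) ^ (-α) := by
    rw [← rpow_neg hm0.le, ← rpow_add hm0, ← rpow_add hm0]
    ring_nf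
  have hexp : exp (k * (1 + |α + β + γ + 2| + |α|)) =
      exp k * exp (k * |α + β + γ + 2|) * exp (k * |α|) := by
    rw [← exp_add, ← exp_add]
    ring_nf
  calc |betaB (α + β + k + 1) (γ + m + 1) / Gamma (k + α - m + 1)|
      = |Gamma (k + (α + β + 1))| * |Gamma (m + (γ + 1))| *
          |(Gamma ((m + k : ℕ) + (α + β + γ + 2)))⁻¹| * |(Gamma (k + α - m + 1))⁻¹| := by
        rw [betaB, div_eq_mul_inv, div_eq_mul_inv, abs_mul, abs_mul, abs_mul]
        push_cast
        ring_nf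
    _ ≤ C₁ * (exp k * k.factorial) * (C₂ * ((m : ℝ) ^ (γ + 1) * Gamma m)) *
          (C₃ * (exp (k * |α + β + γ + 2|) *
            ((m : ℝ) ^ (α + β + γ + 2) * Gamma m * k.factorial)⁻¹)) *
          (C₄ * (exp (k * |α|) * ((m : ℝ) ^ (-α) * Gamma m))) := by
        gcongr
        exacts [hnum k, hnum' m hm, hden m k hm, hden' m k hm]
    _ = _ := by
        rw [hrpow, hexp]
        field_simp

lemma exists_abs_sum_Ctilde_mul_betaB_le (α β γ : ℝ) :
    ∃ C > 0, ∃ D ≥ 0, ∀ m n : ℕ, 1 ≤ m →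
      |∑ k ∈ Finset.range (n + 1), (-1 : ℝ) ^ k * Ctilde β γ n k *
          betaB (α + β + k + 1) (γ + m + 1) / Gamma (k + α - m + 1)| ≤
        C * D ^ n * (|Gamma (n + β + 1)| * |Gamma (n + γ + 1)|) *
          ((m : ℝ) ^ (-2 * α - β - 1) * Gamma m) := by
  obtain ⟨C₁, hC₁, hCtilde⟩ := exists_abs_Ctilde_le β γ
  obtain ⟨C₂, hC₂, D, hD, hbeta⟩ := exists_abs_betaB_div_Gamma_le α β γ
  refine ⟨C₁ * C₂, by positivity, 2 * 16 * exp D, by positivity, fun m n hm => ?_⟩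
  have hterm : ∀ k ≤ n, |(-1 : ℝ) ^ k * Ctilde β γ n k *
      betaB (α + β + k + 1) (γ + m + 1) / Gamma (k + α - m + 1)| ≤
        C₁ * 16 ^ n * (|Gamma (n + β + 1)| * |Gamma (n + γ + 1)|) *
          (C₂ * exp (n * D) * ((m : ℝ) ^ (-2 * α - β - 1) * Gamma m)) := fun k hkn => by
    rw [mul_div_assoc, abs_mul, abs_mul, abs_pow, abs_neg, abs_one, one_pow, one_mul]
    refine mul_le_mul (hCtilde n k hkn) ((hbeta m k hm).trans ?_) (abs_nonneg _) (by positivity)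
    gcongr
  refine (abs_sum_range_succ_le le_rfl hterm).trans_eq ?_
  rw [exp_nat_mul, mul_pow, mul_pow]
  ring

lemma exists_abs_Acoef_le (α β γ : ℝ) :
    ∃ C > 0, ∃ D ≥ 0, ∀ m n : ℕ, 1 ≤ m →
      |Acoef α β γ m n| ≤
        C * (D ^ n * (jacobiDelta β γ n * (|Gamma (n + β + 1)| * |Gamma (n + γ + 1)|))) *
          (m : ℝ) ^ (-2 * α - β - 3 / 2) := by
  obtain ⟨C₁, hC₁, hdelta⟩ := exists_jacobiDelta_le β γ
  obtain ⟨C₂, hC₂, D, hD, hsum⟩ := exists_abs_sum_Ctilde_mul_betaB_le α β γ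
  refine ⟨C₁ * C₂, by positivity, D, hD, fun m n hm => ?_⟩
  have hm0 : (0 : ℝ) < m := by exact_mod_cast hm
  have hδn := jacobiDelta_nonneg β γ n
  have hrpow : (m : ℝ) ^ (-2 * α - β - 3 / 2) =
      (m : ℝ) ^ (-(1 / 2) : ℝ) * (m : ℝ) ^ (-2 * α - β - 1) := by
    rw [← rpow_add hm0]
    ring_nf
  calc |Acoef α β γ m n|
      ≤ C₁ * ((m : ℝ) ^ (-(1 / 2) : ℝ) * (Gamma m)⁻¹) * jacobiDelta β γ n *
          (C₂ * D ^ n * (|Gamma (n + β + 1)| * |Gamma (n + γ + 1)|) *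
            ((m : ℝ) ^ (-2 * α - β - 1) * Gamma m)) := by
        rw [Acoef, abs_mul, abs_mul, abs_of_nonneg (jacobiDelta_nonneg β γ m), abs_of_nonneg hδn]
        gcongr
        exacts [hdelta m hm, hsum m n hm]
    _ = _ := by
        rw [hrpow]
        field_simp

lemma pow_mul_jacobiDelta_mul_Gamma_le_cCoef {x β γ : ℝ} (hx : 0 ≤ x) (hβ : -1 < β) (hγ : -1 < γ)
    (n : ℕ) :
    x ^ n * (jacobiDelta β γ n * (|Gamma (n + β + 1)| * |Gamma (n + γ + 1)|)) ≤
      exp (4 * x) * cCoef β γ n := by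
  have hΓβ : 0 < Gamma (n + β + 1) := Gamma_pos_of_pos (by linarith)
  have hΓγ : 0 < Gamma (n + γ + 1) := Gamma_pos_of_pos (by linarith)
  have hδ := jacobiDelta_nonneg β γ n
  have hpow : x ^ n ≤ exp (4 * x) * (n.factorial / 4 ^ n) := by
    have h := pow_div_factorial_le_exp (4 * x) (by positivity) n
    rw [div_le_iff₀ (by positivity), mul_pow] at h
    rw [← mul_div_assoc, le_div_iff₀' (by positivity)]
    exact h
  rw [abs_of_pos hΓβ, abs_of_pos hΓγ]
  calc x ^ n * (jacobiDelta β γ n * (Gamma (n + β + 1) * Gamma (n + γ + 1)))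
      ≤ exp (4 * x) * (n.factorial / 4 ^ n) *
          (jacobiDelta β γ n * (Gamma (n + β + 1) * Gamma (n + γ + 1))) := by gcongr
    _ = exp (4 * x) * cCoef β γ n := by
        rw [cCoef]
        ring

lemma cCoef_comm (β γ : ℝ) (n : ℕ) : cCoef β γ n = cCoef γ β n := by
  rw [cCoef, cCoef, jacobiDelta_comm]
  ring

end JacobiCoefficients

-- Where `α + γ + k + 1` is a pole, `Real.Gamma` is `0` and the `k`-th term of `Acoef` drops out.
theorem stmt7_general (α : ℝ) {β γ : ℝ} (hβ : -1 < β) (hγ : -1 < γ) :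
    ∃ C : ℝ, 0 < C ∧ ∀ m n : ℕ, 1 ≤ m →
      |Acoef α γ β m n| ≤ C * cCoef β γ n * (m : ℝ) ^ (-2 * α - γ - 3 / 2) := by
  obtain ⟨C, hC, D, hD, hbound⟩ := exists_abs_Acoef_le α γ β
  refine ⟨C * exp (4 * D), by positivity, fun m n hm => (hbound m n hm).trans ?_⟩
  rw [cCoef_comm β γ, mul_assoc C (exp _)]
  gcongr C * ?_ * _
  exact pow_mul_jacobiDelta_mul_Gamma_le_cCoef hD hγ hβ n

theorem stmt7 (a b α β γ : ℝ) (hab : a < b) (hβ : β ∈ Set.Icc (-(1 : ℝ) / 2) (1 / 2))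
    (hγ : γ ∈ Set.Icc (-(1 : ℝ) / 2) (1 / 2)) (hα : α ∈ Set.Ioo (-1 : ℝ) 0) :
    ∃ C : ℝ, 0 < C ∧ ∀ m n : ℕ, 1 ≤ m →
      |Acoef α γ β m n| ≤ C * cCoef β γ n * (m : ℝ) ^ (-2 * α - γ - 3 / 2) :=
  stmt7_general α (by linarith [hβ.1]) (by linarith [hγ.1])
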